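/- Let n ≥ 1, 1 ≤ p < ∞, and let f ∈ L^p(ℝⁿ) be such that 𝒩_{s₀,p}(f) < ∞ for some s₀ ∈ (0,1). Then lim_{s → 0⁺} s 𝒩_{s,p}(f)^p = (4/p) ‖f‖_{L^p}^p. -/

import Mathlib

open Real MeasureTheory Filter Topology
open scoped ENNReal

/-! The function `A t = ∫∫ p_t(x, y) |f y - f x| ^ p dy dx` tends to `2 ‖f‖_p ^ p` as `t → ∞`: the
cross terms in `|f y - f x| ^ p ≈ |f y| ^ p + |f x| ^ p` are controlled by
`min (|f x| ^ p) (|f y| ^ p)`, whose integral against `p_t` vanishes because `p_t` tends to zero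
uniformly, while symmetry and the Markov property make each of the two main terms contribute
exactly `‖f‖_p ^ p`. As `σ = s p / 2 → 0⁺`, the weight `σ t ^ (-(σ + 1))` moves its mass to
`t = ∞`, so that `s 𝒩_{s,p}(f) ^ p = (2 / p) σ ∫ t ^ (-(σ + 1)) A t dt` tends to
`(2 / p) (2 ‖f‖_p ^ p)`; finiteness for one `s₀` handles small `t`. -/

section ElementaryInequality

variable {E : Type*} [SeminormedAddCommGroup E] {p ε : ℝ}

lemma exists_forall_mem_Icc_rpow_mem_Icc (p : ℝ) (hε : 0 < ε) :
    ∃ δ ∈ Set.Ioo (0 : ℝ) 1,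
      ∀ r ∈ Set.Icc (1 - δ) (1 + δ), r ^ p ∈ Set.Icc (1 - ε) (1 + ε) := by
  have hcont : ContinuousAt (fun r : ℝ => r ^ p) 1 :=
    continuousAt_rpow_const _ _ (.inl one_ne_zero)
  obtain ⟨δ, hδ, hball⟩ := Metric.continuousAt_iff.1 hcont ε hε
  refine ⟨min (δ / 2) (1 / 2), ⟨by positivity, (min_le_right _ _).trans_lt one_half_lt_one⟩,
    fun r hr => ?_⟩
  have hr' : |r - 1| < δ := abs_lt.2 ⟨by grind, by grind⟩
  have hrp : |r ^ p - 1| < ε := by simpa only [Real.dist_eq, one_rpow] using hball hr'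
  exact ⟨by linarith [(abs_lt.1 hrp).1], by linarith [(abs_lt.1 hrp).2]⟩

/-- The elementary inequality behind the Brezis–Lieb lemma. -/
lemma exists_abs_norm_sub_rpow_sub_norm_rpow_le (hp : 0 < p) (hε : 0 < ε) :
    ∃ C, ∀ a b : E, |‖a - b‖ ^ p - ‖a‖ ^ p| ≤ ε * ‖a‖ ^ p + C * ‖b‖ ^ p := by
  obtain ⟨δ, ⟨hδ0, hδ1⟩, hδ⟩ := exists_forall_mem_Icc_rpow_mem_Icc p hε
  refine ⟨(1 + δ⁻¹) ^ p, fun a b => ?_⟩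
  rcases le_or_gt ‖b‖ (δ * ‖a‖) with hba | hab
  · have hupper : ‖a - b‖ ^ p ≤ (1 + ε) * ‖a‖ ^ p :=
      calc ‖a - b‖ ^ p ≤ ((1 + δ) * ‖a‖) ^ p := by
            gcongr; linarith [norm_sub_le a b]
        _ = (1 + δ) ^ p * ‖a‖ ^ p := mul_rpow (by positivity) (norm_nonneg a)
        _ ≤ (1 + ε) * ‖a‖ ^ p := by gcongr; exact (hδ _ ⟨by linarith, le_rfl⟩).2
    have hlower : (1 - ε) * ‖a‖ ^ p ≤ ‖a - b‖ ^ p :=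
      calc (1 - ε) * ‖a‖ ^ p ≤ (1 - δ) ^ p * ‖a‖ ^ p := by
            gcongr; exact (hδ _ ⟨le_rfl, by linarith⟩).1
        _ = ((1 - δ) * ‖a‖) ^ p := (mul_rpow (by linarith) (norm_nonneg a)).symm
        _ ≤ ‖a - b‖ ^ p := by
            have : 0 ≤ (1 - δ) * ‖a‖ := mul_nonneg (by linarith) (norm_nonneg a)
            gcongr; linarith [norm_sub_norm_le a b]
    have hb : 0 ≤ (1 + δ⁻¹) ^ p * ‖b‖ ^ p := by positivity
    exact abs_le.2 ⟨by linarith, by linarith⟩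
  · have ha : ‖a‖ ≤ δ⁻¹ * ‖b‖ := by rw [inv_mul_eq_div, le_div_iff₀' hδ0]; exact hab.le
    have hbound {r : ℝ} (hr : 0 ≤ r) (hrb : r ≤ (1 + δ⁻¹) * ‖b‖) :
        r ^ p ≤ (1 + δ⁻¹) ^ p * ‖b‖ ^ p := by
      rw [← mul_rpow (by positivity) (norm_nonneg b)]
      gcongr
    calc |‖a - b‖ ^ p - ‖a‖ ^ p| ≤ (1 + δ⁻¹) ^ p * ‖b‖ ^ p :=
          abs_sub_le_of_nonneg_of_le (by positivity)
            (hbound (norm_nonneg _) (by linarith [norm_sub_le a b])) (by positivity)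
            (hbound (norm_nonneg _) (by linarith [norm_nonneg b]))
      _ ≤ ε * ‖a‖ ^ p + (1 + δ⁻¹) ^ p * ‖b‖ ^ p := le_add_of_nonneg_left (by positivity)

lemma exists_abs_norm_sub_rpow_sub_add_le (hp : 0 < p) (hε : 0 < ε) :
    ∃ C, ∀ a b : E, |‖a - b‖ ^ p - (‖a‖ ^ p + ‖b‖ ^ p)| ≤
      ε * (‖a‖ ^ p + ‖b‖ ^ p) + C * min (‖a‖ ^ p) (‖b‖ ^ p) := by
  obtain ⟨C, hBL⟩ := exists_abs_norm_sub_rpow_sub_norm_rpow_le (E := E) hp hε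
  have hone_sided (a b : E) : |‖a - b‖ ^ p - (‖a‖ ^ p + ‖b‖ ^ p)| ≤
      ε * (‖a‖ ^ p + ‖b‖ ^ p) + (C + 1) * ‖b‖ ^ p := by
    have hb : 0 ≤ ‖b‖ ^ p := by positivity
    have hεb : 0 ≤ ε * ‖b‖ ^ p := by positivity
    have h := abs_le.1 (hBL a b)
    exact abs_le.2 ⟨by linarith, by linarith⟩
  refine ⟨C + 1, fun a b => ?_⟩
  rcases min_choice (‖a‖ ^ p) (‖b‖ ^ p) with hmin | hmin <;> rw [hmin]
  · simpa only [norm_sub_rev b a, add_comm (‖b‖ ^ p)] using hone_sided b a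
  · exact hone_sided a b

end ElementaryInequality

section Coupling

variable {ι X E : Type*} {l : Filter ι} [MeasurableSpace X] {μ : Measure X}
  {ν : Measure (X × X)} [NormedAddCommGroup E] {f : X → E} {p : ℝ}

lemma integrable_norm_rpow_of_memLp_ofReal {g : X → E} (hp : 0 < p)
    (hg : MemLp g (ENNReal.ofReal p) μ) : Integrable (fun x => ‖g x‖ ^ p) μ := by
  simpa only [ENNReal.toReal_ofReal hp.le] using
    hg.integrable_norm_rpow (ENNReal.ofReal_pos.2 hp).ne' ENNReal.ofReal_ne_top

lemma memLp_sub_of_measurePreserving {q : ℝ≥0∞} (hfst : MeasurePreserving Prod.fst ν μ)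
    (hsnd : MeasurePreserving Prod.snd ν μ) (hf : MemLp f q μ) :
    MemLp (fun z : X × X => f z.2 - f z.1) q ν :=
  (hf.comp_measurePreserving hsnd).sub (hf.comp_measurePreserving hfst)

lemma integral_add_of_measurePreserving {g : X → ℝ} (hfst : MeasurePreserving Prod.fst ν μ)
    (hsnd : MeasurePreserving Prod.snd ν μ) (hg : Integrable g μ) :
    ∫ z, (g z.2 + g z.1) ∂ν = 2 * ∫ x, g x ∂μ := by
  have hcomp {T : X × X → X} (hT : MeasurePreserving T ν μ) :
      ∫ z, g (T z) ∂ν = ∫ x, g x ∂μ := by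
    rw [← hT.map_eq, integral_map hT.aemeasurable (hT.map_eq.symm ▸ hg.1)]
  have hg₁ : Integrable (fun z : X × X => g z.1) ν := hfst.integrable_comp_of_integrable hg
  have hg₂ : Integrable (fun z : X × X => g z.2) ν := hsnd.integrable_comp_of_integrable hg
  rw [integral_add hg₂ hg₁, hcomp hsnd, hcomp hfst, two_mul]

lemma exists_abs_integral_norm_sub_rpow_sub_le (hp : 0 < p)
    (hf : MemLp f (ENNReal.ofReal p) μ) {ε : ℝ} (hε : 0 < ε) :
    ∃ C, ∀ ν : Measure (X × X), MeasurePreserving Prod.fst ν μ → MeasurePreserving Prod.snd ν μ →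
      |(∫ z, ‖f z.2 - f z.1‖ ^ p ∂ν) - 2 * ∫ x, ‖f x‖ ^ p ∂μ| ≤
        ε * (2 * ∫ x, ‖f x‖ ^ p ∂μ) + C * ∫ z, min (‖f z.2‖ ^ p) (‖f z.1‖ ^ p) ∂ν := by
  obtain ⟨C, hC⟩ := exists_abs_norm_sub_rpow_sub_add_le (E := E) hp hε
  refine ⟨C, fun ν hfst hsnd => ?_⟩
  have hu := integrable_norm_rpow_of_memLp_ofReal hp hf
  have hu₁ : Integrable (fun z : X × X => ‖f z.1‖ ^ p) ν := hfst.integrable_comp_of_integrable hu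
  have hu₂ : Integrable (fun z : X × X => ‖f z.2‖ ^ p) ν := hsnd.integrable_comp_of_integrable hu
  have hadd : Integrable (fun z : X × X => ‖f z.2‖ ^ p + ‖f z.1‖ ^ p) ν := hu₂.add hu₁
  have hmin : Integrable (fun z : X × X => min (‖f z.2‖ ^ p) (‖f z.1‖ ^ p)) ν := hu₂.inf hu₁
  have hsub := integrable_norm_rpow_of_memLp_ofReal hp (memLp_sub_of_measurePreserving hfst hsnd hf)
  rw [← integral_add_of_measurePreserving hfst hsnd hu, ← integral_sub hsub hadd,
    ← integral_const_mul, ← integral_const_mul,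
    ← integral_add (hadd.const_mul ε) (hmin.const_mul C)]
  exact abs_integral_le_integral_abs.trans <|
    integral_mono (hsub.sub hadd).abs ((hadd.const_mul ε).add (hmin.const_mul C))
      fun z => hC (f z.2) (f z.1)

theorem tendsto_integral_norm_sub_rpow {ν : ι → Measure (X × X)} (hp : 0 < p)
    (hf : MemLp f (ENNReal.ofReal p) μ)
    (hfst : ∀ᶠ i in l, MeasurePreserving Prod.fst (ν i) μ)
    (hsnd : ∀ᶠ i in l, MeasurePreserving Prod.snd (ν i) μ)
    (hmin : Tendsto (fun i => ∫ z, min (‖f z.2‖ ^ p) (‖f z.1‖ ^ p) ∂ν i) l (𝓝 0)) :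
    Tendsto (fun i => ∫ z, ‖f z.2 - f z.1‖ ^ p ∂ν i) l (𝓝 (2 * ∫ x, ‖f x‖ ^ p ∂μ)) := by
  set L := 2 * ∫ x, ‖f x‖ ^ p ∂μ
  have hL : 0 < L + 1 := add_pos_of_nonneg_of_pos
    (mul_nonneg zero_le_two (integral_nonneg fun x => by positivity)) one_pos
  refine Metric.tendsto_nhds.2 fun η hη => ?_
  obtain ⟨ε, hε, hεL⟩ : ∃ ε > 0, ε * L < η := by
    refine ⟨η / (L + 1), div_pos hη hL, ?_⟩
    rw [div_mul_eq_mul_div, div_lt_iff₀ hL]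
    linarith
  obtain ⟨C, hC⟩ := exists_abs_integral_norm_sub_rpow_sub_le hp hf hε
  have hbound : Tendsto (fun i => ε * L + C * ∫ z, min (‖f z.2‖ ^ p) (‖f z.1‖ ^ p) ∂ν i) l
      (𝓝 (ε * L)) := by
    simpa only [mul_zero, add_zero] using (hmin.const_mul C).const_add (ε * L)
  filter_upwards [hfst, hsnd, hbound.eventually_lt_const hεL] with i hfst hsnd hlt
  exact (hC (ν i) hfst hsnd).trans_lt hlt

end Coupling

section SymmMarkovDensity

variable {ι X E : Type*} {l : Filter ι} [MeasurableSpace X] {μ : Measure X}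
  {k : X → X → ℝ≥0∞} [NormedAddCommGroup E] {f : X → E} {p : ℝ}

/-- A symmetric Markov transition density with respect to `μ`, the property of the heat kernel on
which the large-time asymptotics rests. -/
structure IsSymmMarkovDensity (μ : Measure X) (k : X → X → ℝ≥0∞) : Prop where
  measurable : Measurable (Function.uncurry k)
  symm : ∀ x y, k x y = k y x
  lintegral_eq_one : ∀ x, ∫⁻ y, k x y ∂μ = 1

/-- The measure `k x y dμ(x) dμ(y)`: the joint law of the start and the end of a step with
transition density `k` started from `μ`. -/
noncomputable def jointMeasure (μ : Measure X) (k : X → X → ℝ≥0∞) : Measure (X × X) :=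
  (μ.prod μ).withDensity (Function.uncurry k)

namespace IsSymmMarkovDensity

lemma measurable_right (hk : IsSymmMarkovDensity μ k) (x : X) : Measurable (k x) :=
  hk.measurable.of_uncurry_left

lemma lintegral_mul_const_eq (hk : IsSymmMarkovDensity μ k) (x : X) (c : ℝ≥0∞) :
    ∫⁻ y, k x y * c ∂μ = c := by
  rw [lintegral_mul_const _ (hk.measurable_right x), hk.lintegral_eq_one, one_mul]

variable [SFinite μ]

lemma lintegral_jointMeasure (hk : IsSymmMarkovDensity μ k) {g : X × X → ℝ≥0∞}
    (hg : AEMeasurable g (μ.prod μ)) :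
    ∫⁻ z, g z ∂jointMeasure μ k = ∫⁻ x, ∫⁻ y, k x y * g (x, y) ∂μ ∂μ := by
  rw [jointMeasure, lintegral_withDensity_eq_lintegral_mul₀ hk.measurable.aemeasurable hg,
    lintegral_prod _ (hk.measurable.aemeasurable.mul hg)]
  rfl

lemma measurePreserving_fst (hk : IsSymmMarkovDensity μ k) :
    MeasurePreserving Prod.fst (jointMeasure μ k) μ := by
  refine ⟨measurable_fst, Measure.ext_of_lintegral _ fun g hg => ?_⟩
  rw [lintegral_map hg measurable_fst,
    hk.lintegral_jointMeasure (g := fun z => g z.1) (hg.comp measurable_fst).aemeasurable]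
  exact lintegral_congr fun x => hk.lintegral_mul_const_eq x (g x)

lemma measurePreserving_snd (hk : IsSymmMarkovDensity μ k) :
    MeasurePreserving Prod.snd (jointMeasure μ k) μ := by
  refine ⟨measurable_snd, Measure.ext_of_lintegral _ fun g hg => ?_⟩
  have hmeas : Measurable fun z : X × X => k z.1 z.2 * g z.2 :=
    hk.measurable.mul (hg.comp measurable_snd)
  rw [lintegral_map hg measurable_snd,
    hk.lintegral_jointMeasure (g := fun z => g z.2) (hg.comp measurable_snd).aemeasurable,
    lintegral_lintegral_swap hmeas.aemeasurable]
  refine lintegral_congr fun y => ?_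
  simp only [hk.symm _ y]
  exact hk.lintegral_mul_const_eq y (g y)

lemma lintegral_min_le (hk : IsSymmMarkovDensity μ k) {c : ℝ≥0∞} (hkc : ∀ x y, k x y ≤ c)
    {u : X → ℝ≥0∞} (hu : AEMeasurable u μ) :
    ∫⁻ z, min (u z.2) (u z.1) ∂jointMeasure μ k ≤
      ∫⁻ x, min (u x) (c * ∫⁻ y, u y ∂μ) ∂μ := by
  rw [hk.lintegral_jointMeasure (hu.comp_snd.min hu.comp_fst)]
  refine lintegral_mono fun x => le_min ?_ ?_
  · calc ∫⁻ y, k x y * min (u y) (u x) ∂μ ≤ ∫⁻ y, k x y * u x ∂μ := by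
          gcongr; exact min_le_right _ _
      _ = u x := hk.lintegral_mul_const_eq x (u x)
  · calc ∫⁻ y, k x y * min (u y) (u x) ∂μ ≤ ∫⁻ y, c * u y ∂μ := by
          gcongr with y
          · exact hkc x y
          · exact min_le_left _ _
      _ = c * ∫⁻ y, u y ∂μ := lintegral_const_mul'' c hu

end IsSymmMarkovDensity

lemma tendsto_lintegral_min_const_zero [l.IsCountablyGenerated] {u : X → ℝ≥0∞}
    (hu : AEMeasurable u μ) (hfin : ∫⁻ x, u x ∂μ ≠ ⊤) {c : ι → ℝ≥0∞} (hc : Tendsto c l (𝓝 0)) :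
    Tendsto (fun i => ∫⁻ x, min (u x) (c i) ∂μ) l (𝓝 0) := by
  have hlim : Tendsto (fun i => ∫⁻ x, min (u x) (c i) ∂μ) l (𝓝 (∫⁻ _, 0 ∂μ)) := by
    refine tendsto_lintegral_filter_of_dominated_convergence' u
      (.of_forall fun i => hu.min aemeasurable_const)
      (.of_forall fun i => .of_forall fun x => min_le_left _ _) hfin (.of_forall fun x => ?_)
    simpa only [min_zero] using (tendsto_const_nhds (x := u x)).min hc
  simpa only [lintegral_zero] using hlim

variable [SFinite μ] {k : ι → X → X → ℝ≥0∞} {c : ι → ℝ≥0∞}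

lemma tendsto_lintegral_min_jointMeasure [l.IsCountablyGenerated]
    (hk : ∀ᶠ i in l, IsSymmMarkovDensity μ (k i)) (hkc : ∀ᶠ i in l, ∀ x y, k i x y ≤ c i)
    (hc : Tendsto c l (𝓝 0)) {u : X → ℝ≥0∞} (hu : AEMeasurable u μ)
    (hfin : ∫⁻ x, u x ∂μ ≠ ⊤) :
    Tendsto (fun i => ∫⁻ z, min (u z.2) (u z.1) ∂jointMeasure μ (k i)) l (𝓝 0) := by
  have hcU : Tendsto (fun i => c i * ∫⁻ x, u x ∂μ) l (𝓝 0) := by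
    simpa only [zero_mul] using ENNReal.Tendsto.mul_const hc (.inr hfin)
  refine tendsto_of_tendsto_of_tendsto_of_le_of_le' tendsto_const_nhds
    (tendsto_lintegral_min_const_zero hu hfin hcU) (.of_forall fun i => zero_le) ?_
  filter_upwards [hk, hkc] with i hk hkc
  exact hk.lintegral_min_le hkc hu

theorem tendsto_lintegral_lintegral_norm_sub_rpow [l.IsCountablyGenerated]
    (hk : ∀ᶠ i in l, IsSymmMarkovDensity μ (k i)) (hkc : ∀ᶠ i in l, ∀ x y, k i x y ≤ c i)
    (hc : Tendsto c l (𝓝 0)) (hp : 0 < p) (hf : MemLp f (ENNReal.ofReal p) μ) :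
    Tendsto (fun i => ∫⁻ x, ∫⁻ y, k i x y * ENNReal.ofReal (‖f y - f x‖ ^ p) ∂μ ∂μ) l
      (𝓝 (ENNReal.ofReal (2 * ∫ x, ‖f x‖ ^ p ∂μ))) := by
  have hfst := hk.mono fun i hi => hi.measurePreserving_fst
  have hsnd := hk.mono fun i hi => hi.measurePreserving_snd
  have hu := integrable_norm_rpow_of_memLp_ofReal hp hf
  have hmin : Tendsto (fun i => ∫ z, min (‖f z.2‖ ^ p) (‖f z.1‖ ^ p) ∂jointMeasure μ (k i)) l
      (𝓝 0) := by
    have hlim := tendsto_lintegral_min_jointMeasure hk hkc hc hu.1.aemeasurable.ennreal_ofReal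
      hu.lintegral_lt_top.ne
    refine ((ENNReal.tendsto_toReal ENNReal.zero_ne_top).comp hlim).congr' ?_
    filter_upwards [hfst, hsnd] with i hfst hsnd
    have hint := (hsnd.integrable_comp_of_integrable hu).inf (hfst.integrable_comp_of_integrable hu)
    simp only [Function.comp_apply, ← ENNReal.ofReal_min]
    refine (integral_eq_lintegral_of_nonneg_ae (.of_forall fun z => ?_) hint.1).symm
    exact le_min (rpow_nonneg (norm_nonneg _) p) (rpow_nonneg (norm_nonneg _) p)
  refine (ENNReal.tendsto_ofReal (tendsto_integral_norm_sub_rpow hp hf hfst hsnd hmin)).congr' ?_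
  filter_upwards [hk, hfst, hsnd] with i hk hfst hsnd
  have hmeas : AEMeasurable (fun z : X × X => ENNReal.ofReal (‖f z.2 - f z.1‖ ^ p)) (μ.prod μ) :=
    ((hf.1.comp_snd.sub hf.1.comp_fst).norm.aemeasurable.pow_const p).ennreal_ofReal
  rw [ofReal_integral_eq_lintegral_ofReal (integrable_norm_rpow_of_memLp_ofReal hp
    (memLp_sub_of_measurePreserving hfst hsnd hf)) (.of_forall fun z => by positivity),
    hk.lintegral_jointMeasure hmeas]

end SymmMarkovDensity

section AbelianTheorem

variable {A : ℝ → ℝ≥0∞} {B c : ℝ≥0∞} {σ σ₀ T : ℝ}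

lemma ofReal_mul_lintegral_Ioi_rpow (hσ : 0 < σ) (hT : 0 < T) :
    ENNReal.ofReal σ * ∫⁻ t in Set.Ioi T, ENNReal.ofReal (t ^ (-(σ + 1))) =
      ENNReal.ofReal (T ^ (-σ)) := by
  have hlt : -(σ + 1) < -1 := by linarith
  have hnonneg : 0 ≤ᵐ[volume.restrict (Set.Ioi T)] fun t : ℝ => t ^ (-(σ + 1)) := by
    filter_upwards [ae_restrict_mem measurableSet_Ioi] with t ht
    exact rpow_nonneg (hT.trans ht).le _
  rw [← ofReal_integral_eq_lintegral_ofReal (integrableOn_Ioi_rpow_of_lt hlt hT) hnonneg,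
    integral_Ioi_rpow_of_lt hlt hT, ← ENNReal.ofReal_mul hσ.le,
    show -(σ + 1) + 1 = -σ by ring, neg_div_neg_eq, mul_div_cancel₀ _ hσ.ne']

lemma ofReal_mul_lintegral_Ioi_rpow_mul_const (hσ : 0 < σ) (hT : 0 < T) (c : ℝ≥0∞) :
    ENNReal.ofReal σ * ∫⁻ t in Set.Ioi T, ENNReal.ofReal (t ^ (-(σ + 1))) * c =
      ENNReal.ofReal (T ^ (-σ)) * c := by
  rw [lintegral_mul_const _ (by fun_prop), ← mul_assoc, ofReal_mul_lintegral_Ioi_rpow hσ hT]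

lemma le_ofReal_mul_lintegral_Ioi_rpow_mul (hσ : 0 < σ) (hT : 0 < T)
    (hA : ∀ t ∈ Set.Ioi T, c ≤ A t) :
    ENNReal.ofReal (T ^ (-σ)) * c ≤
      ENNReal.ofReal σ * ∫⁻ t in Set.Ioi 0, ENNReal.ofReal (t ^ (-(σ + 1))) * A t := by
  rw [← ofReal_mul_lintegral_Ioi_rpow_mul_const hσ hT]
  gcongr ENNReal.ofReal σ * ?_
  calc ∫⁻ t in Set.Ioi T, ENNReal.ofReal (t ^ (-(σ + 1))) * c
    _ ≤ ∫⁻ t in Set.Ioi T, ENNReal.ofReal (t ^ (-(σ + 1))) * A t :=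
        setLIntegral_mono' measurableSet_Ioi fun t ht => by gcongr; exact hA t ht
    _ ≤ ∫⁻ t in Set.Ioi 0, ENNReal.ofReal (t ^ (-(σ + 1))) * A t :=
        lintegral_mono_set (Set.Ioi_subset_Ioi hT.le)

lemma lintegral_Ioc_rpow_mul_le (hσ : σ ≤ σ₀) :
    ∫⁻ t in Set.Ioc 0 T, ENNReal.ofReal (t ^ (-(σ + 1))) * A t ≤
      ENNReal.ofReal (T ^ (σ₀ - σ)) *
        ∫⁻ t in Set.Ioi 0, ENNReal.ofReal (t ^ (-(σ₀ + 1))) * A t := by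
  rw [← lintegral_const_mul' _ _ ENNReal.ofReal_ne_top]
  refine (setLIntegral_mono' measurableSet_Ioc fun t ht => ?_).trans
    (lintegral_mono_set Set.Ioc_subset_Ioi_self)
  have ht0 : 0 < t := ht.1
  have hpow : t ^ (-(σ + 1)) ≤ T ^ (σ₀ - σ) * t ^ (-(σ₀ + 1)) :=
    calc t ^ (-(σ + 1)) = t ^ (σ₀ - σ) * t ^ (-(σ₀ + 1)) := by rw [← rpow_add ht0]; ring_nf
      _ ≤ T ^ (σ₀ - σ) * t ^ (-(σ₀ + 1)) := by
          gcongr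
          exact ht.2
  rw [← mul_assoc, ← ENNReal.ofReal_mul (rpow_nonneg (ht0.le.trans ht.2) _)]
  gcongr

lemma ofReal_mul_lintegral_Ioi_rpow_mul_le (hσ : 0 < σ) (hσσ₀ : σ ≤ σ₀) (hT : 0 < T)
    (hA : ∀ t ∈ Set.Ioi T, A t ≤ c) :
    ENNReal.ofReal σ * ∫⁻ t in Set.Ioi 0, ENNReal.ofReal (t ^ (-(σ + 1))) * A t ≤
      (ENNReal.ofReal (σ * T ^ (σ₀ - σ)) *
          ∫⁻ t in Set.Ioi 0, ENNReal.ofReal (t ^ (-(σ₀ + 1))) * A t) +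
        ENNReal.ofReal (T ^ (-σ)) * c := by
  rw [← ofReal_mul_lintegral_Ioi_rpow_mul_const hσ hT, ENNReal.ofReal_mul hσ.le, mul_assoc,
    ← mul_add, ← Set.Ioc_union_Ioi_eq_Ioi hT.le]
  gcongr ENNReal.ofReal σ * ?_
  refine (lintegral_union_le _ _ _).trans (add_le_add ?_ ?_)
  · rw [Set.Ioc_union_Ioi_eq_Ioi hT.le]
    exact lintegral_Ioc_rpow_mul_le hσσ₀
  · exact setLIntegral_mono' measurableSet_Ioi fun t ht => by gcongr; exact hA t ht

lemma tendsto_ofReal_rpow_neg_mul (hT : 0 < T) (c : ℝ≥0∞) :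
    Tendsto (fun σ : ℝ => ENNReal.ofReal (T ^ (-σ)) * c) (𝓝 0) (𝓝 c) := by
  have hcont : Continuous fun σ : ℝ => T ^ (-σ) := by fun_prop (disch := exact hT.ne')
  have hlim := ENNReal.tendsto_ofReal (hcont.tendsto 0)
  rw [neg_zero, rpow_zero, ENNReal.ofReal_one] at hlim
  simpa only [one_mul] using ENNReal.Tendsto.mul_const hlim (.inl one_ne_zero)

/-- An Abelian theorem for the Mellin transform. -/
theorem tendsto_ofReal_mul_lintegral_Ioi_rpow_mul (hA : Tendsto A atTop (𝓝 B)) (hσ₀ : 0 < σ₀)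
    (hfin : ∫⁻ t in Set.Ioi 0, ENNReal.ofReal (t ^ (-(σ₀ + 1))) * A t ≠ ⊤) :
    Tendsto
      (fun σ : ℝ =>
        ENNReal.ofReal σ * ∫⁻ t in Set.Ioi 0, ENNReal.ofReal (t ^ (-(σ + 1))) * A t)
      (𝓝[>] 0) (𝓝 B) := by
  set N := ∫⁻ t in Set.Ioi 0, ENNReal.ofReal (t ^ (-(σ₀ + 1))) * A t
  have exists_cutoff {P : ℝ≥0∞ → Prop} (hP : ∀ᶠ t : ℝ in atTop, P (A t)) :
      ∃ T : ℝ, 0 < T ∧ ∀ t ∈ Set.Ioi T, P (A t) := by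
    obtain ⟨T, hT, hPT⟩ := ((eventually_gt_atTop 0).and (eventually_forall_ge_atTop.2 hP)).exists
    exact ⟨T, hT, fun t ht => hPT t (Set.mem_Ioi.1 ht).le⟩
  refine tendsto_order.2 ⟨fun a haB => ?_, fun b hBb => ?_⟩
  · obtain ⟨c, hac, hcB⟩ := exists_between haB
    obtain ⟨T, hT, hcA⟩ := exists_cutoff (hA.eventually_const_le hcB)
    have hlim : Tendsto (fun σ : ℝ => ENNReal.ofReal (T ^ (-σ)) * c) (𝓝[>] 0) (𝓝 c) :=
      (tendsto_ofReal_rpow_neg_mul hT c).mono_left nhdsWithin_le_nhds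
    filter_upwards [hlim.eventually_const_lt hac, self_mem_nhdsWithin] with σ hlt hσ
    exact hlt.trans_le (le_ofReal_mul_lintegral_Ioi_rpow_mul hσ hT hcA)
  · obtain ⟨c, hBc, hcb⟩ := exists_between hBb
    obtain ⟨T, hT, hAc⟩ := exists_cutoff (hA.eventually_le_const hBc)
    have hsmall : Tendsto (fun σ : ℝ => ENNReal.ofReal (σ * T ^ (σ₀ - σ)) * N) (𝓝 0) (𝓝 0) := by
      have hcont : Continuous fun σ : ℝ => σ * T ^ (σ₀ - σ) := by fun_prop (disch := exact hT.ne')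
      simpa only [zero_mul, ENNReal.ofReal_zero] using
        ENNReal.Tendsto.mul_const (ENNReal.tendsto_ofReal (hcont.tendsto 0)) (.inr hfin)
    have hlim : Tendsto
        (fun σ => ENNReal.ofReal (σ * T ^ (σ₀ - σ)) * N + ENNReal.ofReal (T ^ (-σ)) * c)
        (𝓝[>] 0) (𝓝 c) := by
      simpa only [zero_add] using
        (hsmall.add (tendsto_ofReal_rpow_neg_mul hT c)).mono_left nhdsWithin_le_nhds
    filter_upwards [hlim.eventually_lt_const hcb, Ioo_mem_nhdsGT hσ₀] with σ hlt hσ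
    exact (ofReal_mul_lintegral_Ioi_rpow_mul_le hσ.1 hσ.2.le hT hAc).trans_lt hlt

end AbelianTheorem

section HeatKernel

variable {V : Type*} [NormedAddCommGroup V] [InnerProductSpace ℝ V]

/-- The Gauss–Weierstrass kernel of a Euclidean space `V`, meaningful for `0 < t`. -/
noncomputable def heatKernel (t : ℝ) (x y : V) : ℝ :=
  (4 * π * t) ^ (-(Module.finrank ℝ V : ℝ) / 2) * Real.exp (-‖x - y‖ ^ 2 / (4 * t))

variable {t : ℝ}

lemma heatKernel_nonneg (ht : 0 < t) (x y : V) : 0 ≤ heatKernel t x y := by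
  unfold heatKernel
  positivity

lemma heatKernel_comm (t : ℝ) (x y : V) : heatKernel t x y = heatKernel t y x := by
  rw [heatKernel, norm_sub_rev, heatKernel]

lemma heatKernel_le (ht : 0 < t) (x y : V) :
    heatKernel t x y ≤ (4 * π * t) ^ (-(Module.finrank ℝ V : ℝ) / 2) := by
  refine mul_le_of_le_one_right (by positivity) (exp_le_one_iff.2 ?_)
  exact div_nonpos_of_nonpos_of_nonneg (neg_nonpos.2 (sq_nonneg _)) (by positivity)

variable [FiniteDimensional ℝ V]

variable (V) in
lemma tendsto_heatKernel_bound_atTop [Nontrivial V] :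
    Tendsto (fun t : ℝ => (4 * π * t) ^ (-(Module.finrank ℝ V : ℝ) / 2)) atTop (𝓝 0) := by
  have hd : 0 < (Module.finrank ℝ V : ℝ) / 2 := by
    have := Module.finrank_pos (R := ℝ) (M := V)
    positivity
  have hbase : Tendsto (fun t : ℝ => 4 * π * t) atTop atTop :=
    tendsto_id.const_mul_atTop (by positivity)
  simpa only [Function.comp_def, neg_div] using (tendsto_rpow_neg_atTop hd).comp hbase

variable [MeasurableSpace V] [BorelSpace V]

lemma measurable_heatKernel (t : ℝ) : Measurable fun z : V × V => heatKernel t z.1 z.2 := by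
  unfold heatKernel
  fun_prop

lemma integral_heatKernel (ht : 0 < t) (x : V) : ∫ y, heatKernel t x y = 1 := by
  have hgauss : ∫ v : V, Real.exp (-‖v‖ ^ 2 / (4 * t)) =
      (4 * π * t) ^ ((Module.finrank ℝ V : ℝ) / 2) := by
    have h := GaussianFourier.integral_rexp_neg_mul_sq_norm (V := V) (b := (4 * t)⁻¹)
      (by positivity)
    simpa only [div_inv_eq_mul, neg_mul, inv_mul_eq_div, ← neg_div, mul_left_comm π, ← mul_assoc]
      using h
  simp only [heatKernel]
  rw [integral_const_mul, integral_sub_left_eq_self (fun v : V => Real.exp (-‖v‖ ^ 2 / (4 * t))),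
    hgauss, ← rpow_add (by positivity), neg_div, neg_add_cancel, rpow_zero]

lemma isSymmMarkovDensity_heatKernel (ht : 0 < t) :
    IsSymmMarkovDensity (volume : Measure V) fun x y => ENNReal.ofReal (heatKernel t x y) where
  measurable := (measurable_heatKernel t).ennreal_ofReal
  symm x y := by rw [heatKernel_comm]
  lintegral_eq_one x := by
    have hint : Integrable (heatKernel t x) :=
      .of_integral_ne_zero (by rw [integral_heatKernel ht]; exact one_ne_zero)
    rw [← ofReal_integral_eq_lintegral_ofReal hint (.of_forall (heatKernel_nonneg ht x)),
      integral_heatKernel ht, ENNReal.ofReal_one]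

variable {E : Type*} [NormedAddCommGroup E] {f : V → E} {p s₀ : ℝ}

/-- The double integral of `p_t(x, y) |f y - f x| ^ p`, as a function of the time `t`. -/
noncomputable def heatEnergy (p : ℝ) (f : V → E) (t : ℝ) : ℝ≥0∞ :=
  ∫⁻ x, ∫⁻ y, ENNReal.ofReal (heatKernel t x y * ‖f y - f x‖ ^ p)

/-- The `p`-th power `𝒩_{s,p}(f) ^ p` of the heat-semigroup Besov seminorm. -/
noncomputable def heatBesovEnergy (s p : ℝ) (f : V → E) : ℝ≥0∞ :=
  ∫⁻ t in Set.Ioi 0, ENNReal.ofReal (t ^ (-(s * p / 2 + 1))) * heatEnergy p f t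

lemma tendsto_heatEnergy_atTop [Nontrivial V] (hp : 0 < p)
    (hf : MemLp f (ENNReal.ofReal p) volume) :
    Tendsto (heatEnergy p f) atTop (𝓝 (ENNReal.ofReal (2 * ∫ x, ‖f x‖ ^ p))) := by
  have hmarkov : ∀ᶠ t : ℝ in atTop, IsSymmMarkovDensity (volume : Measure V)
      fun x y => ENNReal.ofReal (heatKernel t x y) :=
    (eventually_gt_atTop 0).mono fun t ht => isSymmMarkovDensity_heatKernel ht
  have hbound : ∀ᶠ t : ℝ in atTop, ∀ x y : V, ENNReal.ofReal (heatKernel t x y) ≤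
      ENNReal.ofReal ((4 * π * t) ^ (-(Module.finrank ℝ V : ℝ) / 2)) :=
    (eventually_gt_atTop 0).mono fun t ht x y => ENNReal.ofReal_le_ofReal (heatKernel_le ht x y)
  have hdecay := ENNReal.tendsto_ofReal (tendsto_heatKernel_bound_atTop V)
  rw [ENNReal.ofReal_zero] at hdecay
  refine (tendsto_lintegral_lintegral_norm_sub_rpow hmarkov hbound hdecay hp hf).congr' ?_
  filter_upwards [eventually_gt_atTop 0] with t ht
  simp only [heatEnergy, ENNReal.ofReal_mul (heatKernel_nonneg ht _ _)]

theorem mazya_shaposhnikova_limit_general [Nontrivial V] (hp : 0 < p)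
    (hf : MemLp f (ENNReal.ofReal p) volume) (hs₀ : 0 < s₀) (hfin : heatBesovEnergy s₀ p f < ⊤) :
    Tendsto (fun s : ℝ => ENNReal.ofReal s * heatBesovEnergy s p f) (𝓝[>] 0)
      (𝓝 (ENNReal.ofReal ((4 / p) * ∫ x, ‖f x‖ ^ p))) := by
  have habel := tendsto_ofReal_mul_lintegral_Ioi_rpow_mul (tendsto_heatEnergy_atTop hp hf)
    (σ₀ := s₀ * p / 2) (by positivity) hfin.ne
  have hσ : Tendsto (fun s : ℝ => s * p / 2) (𝓝[>] 0) (𝓝[>] 0) := by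
    refine tendsto_nhdsWithin_iff.2 ⟨?_, ?_⟩
    · have hcont : Continuous fun s : ℝ => s * p / 2 := by fun_prop
      simpa only [zero_mul, zero_div] using (hcont.tendsto 0).mono_left nhdsWithin_le_nhds
    · filter_upwards [self_mem_nhdsWithin] with s (hs : 0 < s)
      exact Set.mem_Ioi.2 (by positivity)
  have hlim := ENNReal.Tendsto.const_mul (a := ENNReal.ofReal (2 / p)) (habel.comp hσ)
    (.inr ENNReal.ofReal_ne_top)
  rw [← ENNReal.ofReal_mul (by positivity)] at hlim
  convert hlim using 2
  · rename_i s
    rw [Function.comp_apply, heatBesovEnergy, ← mul_assoc, ← ENNReal.ofReal_mul (by positivity)]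
    congr 2
    field_simp
  · ring_nf

end HeatKernel

theorem mazya_shaposhnikova_limit (n : ℕ) (hn : 1 ≤ n) (p : ℝ) (hp : 1 ≤ p)
    (f : EuclideanSpace ℝ (Fin n) → ℝ) (hf : MemLp f (ENNReal.ofReal p) volume)
    (s₀ : ℝ) (hs₀0 : 0 < s₀) (hs₀1 : s₀ < 1)
    (hfin : (∫⁻ t in Set.Ioi (0 : ℝ),
        ENNReal.ofReal (t ^ (-(s₀ * p / 2 + 1))) *
          ∫⁻ x, ∫⁻ y, ENNReal.ofReal
            ((4 * π * t) ^ (-(n : ℝ) / 2) * Real.exp (-‖x - y‖ ^ 2 / (4 * t)) *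
              |f y - f x| ^ p)) < ⊤) :
    Tendsto (fun s : ℝ => ENNReal.ofReal s *
        ∫⁻ t in Set.Ioi (0 : ℝ),
          ENNReal.ofReal (t ^ (-(s * p / 2 + 1))) *
            ∫⁻ x, ∫⁻ y, ENNReal.ofReal
              ((4 * π * t) ^ (-(n : ℝ) / 2) * Real.exp (-‖x - y‖ ^ 2 / (4 * t)) *
                |f y - f x| ^ p))
      (𝓝[>] (0 : ℝ))
      (𝓝 (ENNReal.ofReal ((4 / p) * ∫ x, |f x| ^ p))) := by
  have : Nontrivial (EuclideanSpace ℝ (Fin n)) :=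
    Module.nontrivial_of_finrank_pos (R := ℝ) (by rwa [finrank_euclideanSpace_fin])
  simpa only [heatBesovEnergy, heatEnergy, heatKernel, finrank_euclideanSpace_fin, norm_eq_abs]
    using mazya_shaposhnikova_limit_general (by linarith) hf hs₀0
      (by simpa only [heatBesovEnergy, heatEnergy, heatKernel, finrank_euclideanSpace_fin,
        norm_eq_abs] using hfin)
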